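/- arXiv:1903.01637 — 2 statements merged into one kernel-verified Lean document; each statement's English description precedes it below -/
import Mathlib

section
/- Let (Ω, 𝒜, μ) be a probability space, E and F standard Borel spaces, X : Ω → E and W : Ω → F measurable maps, and Y : Ω → ℝ an integrable random variable. Let κ_{Y|XW} denote the regular conditional distribution (condDistrib) of Y given (X, W), κ_{X|W} the regular conditional distribution of X given W, and κ_{Y|W} the regular conditional distribution of Y given W. Then for (μ ∘ W⁻¹)-almost every w ∈ F, ∫_E ( ∫_ℝ y dκ_{Y|XW}(x, w) ) dκ_{X|W}(w)(x) = ∫_ℝ y dκ_{Y|W}(w). -/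
open MeasureTheory ProbabilityTheory Filter

/-!
Disintegrating the joint law of `(W, X, Y)` first over `W` and then over `(W, X)` shows that the
kernel `κ_{X|W} ⊗ₖ κ_{Y|XW}` is a version of the conditional law of `(X, Y)` given `W`. Its second
marginal is therefore a version of `κ_{Y|W}`, and the identity is Fubini's theorem for this
composition-product.
-/

section Kernel

variable {α β γ : Type*} {mα : MeasurableSpace α} {mβ : MeasurableSpace β}
  {mγ : MeasurableSpace γ}

theorem map_prodMap_compProd_comap (μ : Measure α) [SFinite μ] (κ : Kernel β γ) [IsSFiniteKernel κ]
    {f : α → β} (hf : Measurable f) :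
    (μ ⊗ₘ κ.comap f hf).map (Prod.map f id) = μ.map f ⊗ₘ κ := by
  have hfid : Measurable (Prod.map f (id : γ → γ)) := hf.prodMap measurable_id
  ext s hs
  rw [Measure.map_apply hfid hs, Measure.compProd_apply (hfid hs), Measure.compProd_apply hs,
    lintegral_map (Kernel.measurable_kernel_prodMk_left hs) hf]
  rfl

theorem integral_snd_compProd {G : Type*} [NormedAddCommGroup G] [NormedSpace ℝ G]
    {κ : Kernel α β} [IsSFiniteKernel κ] {η : Kernel (α × β) γ} [IsSFiniteKernel η]
    {a : α} {f : γ → G} (hf : Integrable f ((κ ⊗ₖ η).snd a)) :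
    ∫ z, f z ∂(κ ⊗ₖ η).snd a = ∫ x, ∫ z, f z ∂η (a, x) ∂κ a := by
  rw [Kernel.snd_apply] at hf ⊢
  rw [integral_map measurable_snd.aemeasurable hf.aestronglyMeasurable]
  exact integral_compProd (hf.comp_measurable measurable_snd)

end Kernel

section CondDistrib

variable {Ω E F G : Type*} {mΩ : MeasurableSpace Ω} {mE : MeasurableSpace E}
  {mF : MeasurableSpace F} {mG : MeasurableSpace G} [StandardBorelSpace G] [Nonempty G]
  {μ : Measure Ω} [IsFiniteMeasure μ] {X : Ω → E} {W : Ω → F} {Y : Ω → G}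

theorem condDistrib_ae_eq_comap_measurableEquiv (hX : AEMeasurable X μ) (hY : AEMeasurable Y μ)
    (e : E ≃ᵐ F) :
    condDistrib Y X μ =ᵐ[μ.map X] (condDistrib Y (e ∘ X) μ).comap e e.measurable := by
  refine condDistrib_ae_eq_of_measure_eq_compProd X hY ?_
  apply (e.prodCongr (.refl G)).map_measurableEquiv_injective
  calc (μ.map fun ω => (X ω, Y ω)).map (Prod.map e id)
    _ = μ.map fun ω => (e (X ω), Y ω) :=
      AEMeasurable.map_map_of_aemeasurable (e.measurable.prodMap measurable_id).aemeasurable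
        (hX.prodMk hY)
    _ = μ.map (e ∘ X) ⊗ₘ condDistrib Y (e ∘ X) μ := (compProd_map_condDistrib hY).symm
    _ = (μ.map X).map e ⊗ₘ condDistrib Y (e ∘ X) μ := by
      rw [AEMeasurable.map_map_of_aemeasurable e.measurable.aemeasurable hX]
    _ = (μ.map X ⊗ₘ (condDistrib Y (e ∘ X) μ).comap e e.measurable).map (Prod.map e id) :=
      (map_prodMap_compProd_comap _ _ e.measurable).symm

theorem condDistrib_ae_eq_swapLeft (hX : AEMeasurable X μ) (hW : AEMeasurable W μ)
    (hY : AEMeasurable Y μ) :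
    condDistrib Y (fun ω => (W ω, X ω)) μ =ᵐ[μ.map fun ω => (W ω, X ω)]
      (condDistrib Y (fun ω => (X ω, W ω)) μ).swapLeft :=
  condDistrib_ae_eq_comap_measurableEquiv (hW.prodMk hX) hY .prodComm

variable [StandardBorelSpace E] [Nonempty E]

theorem condDistrib_prodMk_ae_eq_compProd (hX : AEMeasurable X μ) (hW : AEMeasurable W μ)
    (hY : AEMeasurable Y μ) {η : Kernel (F × E) G} [IsFiniteKernel η]
    (hη : condDistrib Y (fun ω => (W ω, X ω)) μ =ᵐ[μ.map fun ω => (W ω, X ω)] η) :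
    condDistrib (fun ω => (X ω, Y ω)) W μ =ᵐ[μ.map W] condDistrib X W μ ⊗ₖ η := by
  refine condDistrib_ae_eq_of_measure_eq_compProd W (hX.prodMk hY) ?_
  calc μ.map (fun ω => (W ω, X ω, Y ω))
    _ = (μ.map fun ω => ((W ω, X ω), Y ω)).map MeasurableEquiv.prodAssoc :=
      (AEMeasurable.map_map_of_aemeasurable MeasurableEquiv.prodAssoc.measurable.aemeasurable
        ((hW.prodMk hX).prodMk hY)).symm
    _ = (μ.map W ⊗ₘ condDistrib X W μ ⊗ₘ η).map MeasurableEquiv.prodAssoc := by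
      rw [← compProd_map_condDistrib hY, Measure.compProd_congr hη, compProd_map_condDistrib hX]
    _ = μ.map W ⊗ₘ (condDistrib X W μ ⊗ₖ η) := Measure.compProd_assoc'

theorem condDistrib_ae_eq_snd_compProd (hX : AEMeasurable X μ) (hW : AEMeasurable W μ)
    (hY : AEMeasurable Y μ) {η : Kernel (F × E) G} [IsFiniteKernel η]
    (hη : condDistrib Y (fun ω => (W ω, X ω)) μ =ᵐ[μ.map fun ω => (W ω, X ω)] η) :
    condDistrib Y W μ =ᵐ[μ.map W] (condDistrib X W μ ⊗ₖ η).snd := by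
  have snd_joint : condDistrib Y W μ =ᵐ[μ.map W] (condDistrib (fun ω => (X ω, Y ω)) W μ).snd := by
    simpa only [Kernel.snd_eq] using! condDistrib_comp W (hX.prodMk hY) measurable_snd
  filter_upwards [snd_joint, condDistrib_prodMk_ae_eq_compProd hX hW hY hη] with w h_snd h_joint
  rw [h_snd, Kernel.snd_apply, h_joint, Kernel.snd_apply]

end CondDistrib

theorem ae_integrable_condDistrib {Ω F G : Type*} [MeasurableSpace Ω] [MeasurableSpace F]
    [NormedAddCommGroup G] [CompleteSpace G] [SecondCountableTopology G] [MeasurableSpace G]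
    [BorelSpace G] {μ : Measure Ω} [IsFiniteMeasure μ] {W : Ω → F} {Y : Ω → G}
    (hW : AEMeasurable W μ) (hY : Integrable Y μ) :
    ∀ᵐ w ∂μ.map W, Integrable (fun y => y) (condDistrib Y W μ w) := by
  have hY_meas : AEMeasurable Y μ := hY.aestronglyMeasurable.aemeasurable
  refine Integrable.condDistrib_ae_map (f := Prod.snd) hY_meas ?_
  exact (integrable_map_measure measurable_snd.aestronglyMeasurable (hW.prodMk hY_meas)).mpr hY

theorem crf_average_eq_irf_general {Ω E F G : Type*} [MeasurableSpace Ω]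
    [MeasurableSpace E] [StandardBorelSpace E] [Nonempty E] [MeasurableSpace F]
    [NormedAddCommGroup G] [NormedSpace ℝ G] [CompleteSpace G] [SecondCountableTopology G]
    [MeasurableSpace G] [BorelSpace G]
    {μ : Measure Ω} [IsFiniteMeasure μ] {X : Ω → E} {W : Ω → F} {Y : Ω → G}
    (hX : AEMeasurable X μ) (hW : AEMeasurable W μ) (hY : Integrable Y μ) :
    ∀ᵐ w ∂μ.map W,
      ∫ x, (∫ y, y ∂condDistrib Y (fun ω => (X ω, W ω)) μ (x, w)) ∂condDistrib X W μ w
        = ∫ y, y ∂condDistrib Y W μ w := by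
  have hY_meas : AEMeasurable Y μ := hY.aestronglyMeasurable.aemeasurable
  have disintegration := condDistrib_ae_eq_snd_compProd hX hW hY_meas
    (condDistrib_ae_eq_swapLeft hX hW hY_meas)
  filter_upwards [disintegration, ae_integrable_condDistrib hW hY] with w h_eq h_int
  rw [h_eq] at h_int ⊢
  exact (integral_snd_compProd h_int).symm

/-- Theorem 2 of Rambachan & Shephard at the level of regular conditional distributions:
averaging the conditional mean of the outcome `Y` given the history `X` and the treatment `W`
over the conditional distribution of the history given the treatment recovers the conditional
mean of `Y` given `W` alone (the disintegration/tower identity linking the causal response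
function to the impulse response function). -/
theorem crf_average_eq_irf
    {Ω E F : Type*} [MeasurableSpace Ω]
    [MeasurableSpace E] [StandardBorelSpace E] [Nonempty E]
    [MeasurableSpace F] [StandardBorelSpace F] [Nonempty F]
    (μ : Measure Ω) [IsProbabilityMeasure μ]
    (X : Ω → E) (W : Ω → F) (Y : Ω → ℝ)
    (hX : Measurable X) (hW : Measurable W) (hY : Measurable Y)
    (hY_int : Integrable Y μ) :
    ∀ᵐ w ∂(μ.map W),
      ∫ x, (∫ y, y ∂(condDistrib Y (fun ω => (X ω, W ω)) μ (x, w))) ∂(condDistrib X W μ w)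
        = ∫ y, y ∂(condDistrib Y W μ w) :=
  crf_average_eq_irf_general hX.aemeasurable hW.aemeasurable hY_int
end

section
/- Let k : ℝ → ℝ be nonnegative, bounded and Lebesgue-integrable, define k*(x) := ∫_ℝ k(u)·k(x + u) du, and assume k*(x) → 0 as |x| → ∞. Let φ : ℝ → ℝ be bounded and measurable, and fix w, w' ∈ ℝ with w ≠ w'. Then h^{−1} ∫_ℝ φ(x)·k((x − w)/h)·k((x − w')/h) dx → 0 as h → 0⁺. -/
open MeasureTheory Filter

/-!
The substitution `u = (x - w) / h` turns the scaled integral of `|k ((x - w) / h) k ((x - w') / h)|`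
into the autocorrelation of `|k|` at `(w - w') / h`, which leaves every bounded set as `h → 0`.
A bounded integrable kernel is square integrable, and the autocorrelation of a square integrable
function vanishes at infinity: for every `u`, one of `u` and `x + u` has norm at least `‖x‖ / 2`,
so by Hölder's inequality the correlation at `x` is controlled by the `L²` tails beyond `‖x‖ / 2`.
-/

open Bornology Module
open scoped ENNReal Topology

section Correlation

theorem lintegral_enorm_mul_enorm_le_eLpNorm_mul_eLpNorm
    {α F₁ F₂ : Type*} {mα : MeasurableSpace α} {μ : Measure α}
    [NormedAddCommGroup F₁] [NormedAddCommGroup F₂] {p q : ℝ≥0∞} [p.HolderConjugate q]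
    {f : α → F₁} {g : α → F₂} (hf : AEStronglyMeasurable f μ) (hg : AEStronglyMeasurable g μ) :
    ∫⁻ x, ‖f x‖ₑ * ‖g x‖ₑ ∂μ ≤ eLpNorm f p μ * eLpNorm g q μ := by
  simpa [eLpNorm_one_eq_lintegral_enorm, enorm_mul] using
    eLpNorm_le_eLpNorm_mul_eLpNorm_of_nnnorm (r := 1) hf hg (fun y z => ‖y‖ * ‖z‖) 1
      (.of_forall fun x => by simp)

theorem tendsto_eLpNorm_restrict_le_norm_atTop
    {G F : Type*} [SeminormedAddGroup G] [MeasurableSpace G] [OpensMeasurableSpace G]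
    {μ : Measure G} [NormedAddCommGroup F] {p : ℝ≥0∞} {f : G → F} (hf : MemLp f p μ) (hp : p ≠ ∞) :
    Tendsto (fun r : ℝ => eLpNorm f p (μ.restrict {x | r ≤ ‖x‖})) atTop (𝓝 0) := by
  obtain rfl | hp₀ := eq_or_ne p 0
  · simp
  have hmeas (r : ℝ) : MeasurableSet {x : G | r ≤ ‖x‖} :=
    (isClosed_le continuous_const continuous_norm).measurableSet
  have hfin := (lintegral_rpow_enorm_lt_top_of_eLpNorm_lt_top hp₀ hp hf.eLpNorm_lt_top).ne
  have hinter : ⋂ r : ℝ, {x : G | r ≤ ‖x‖} = ∅ :=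
    Set.eq_empty_of_forall_notMem fun x hx =>
      (lt_add_one ‖x‖).not_ge (Set.mem_iInter.mp hx (‖x‖ + 1))
  have htail : Tendsto (fun r : ℝ => ∫⁻ x in {x | r ≤ ‖x‖}, ‖f x‖ₑ ^ p.toReal ∂μ)
      atTop (𝓝 0) := by
    let ν := μ.withDensity fun x => ‖f x‖ₑ ^ p.toReal
    have hν : ν Set.univ ≠ ∞ := by simpa [ν] using hfin
    have hlim := tendsto_measure_iInter_atTop (μ := ν)
      (fun r => (hmeas r).nullMeasurableSet) (fun _ _ hrs _ hx => hrs.trans hx)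
      ⟨0, ne_top_of_le_ne_top hν (measure_mono (Set.subset_univ _))⟩
    simpa [Function.comp_def, hinter, ν, withDensity_apply, hmeas] using hlim
  have hexp : 0 < 1 / p.toReal := one_div_pos.mpr (ENNReal.toReal_pos hp₀ hp)
  simpa only [eLpNorm_eq_lintegral_rpow_enorm_toReal hp₀ hp, ENNReal.zero_rpow_of_pos hexp] using
    htail.ennrpow_const (1 / p.toReal)

/-- The cross-correlation `x ↦ ∫ ‖f u‖ ‖g (x + u)‖ du`; for `f = g = k ≥ 0` this is the kernel
autocorrelation `k*`. It takes values in `ℝ≥0∞`, so that no integrability is needed to define it. -/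
noncomputable def enormCorrelation {G F₁ F₂ : Type*} [Add G] [MeasurableSpace G] [ENorm F₁]
    [ENorm F₂] (μ : Measure G) (f : G → F₁) (g : G → F₂) (x : G) : ℝ≥0∞ :=
  ∫⁻ u, ‖f u‖ₑ * ‖g (x + u)‖ₑ ∂μ

variable {G F₁ F₂ : Type*} [SeminormedAddGroup G] [MeasurableSpace G] [OpensMeasurableSpace G]
  [MeasurableAdd G] {μ : Measure G} [μ.IsAddLeftInvariant] [NormedAddCommGroup F₁]
  [NormedAddCommGroup F₂] {p q : ℝ≥0∞} [p.HolderConjugate q] {f : G → F₁} {g : G → F₂}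

theorem enormCorrelation_le_tail (hf : AEStronglyMeasurable f μ) (hg : AEStronglyMeasurable g μ)
    (x : G) :
    enormCorrelation μ f g x ≤
      eLpNorm f p (μ.restrict {u | ‖x‖ / 2 ≤ ‖u‖}) * eLpNorm g q μ +
        eLpNorm f p μ * eLpNorm g q (μ.restrict {u | ‖x‖ / 2 ≤ ‖u‖}) := by
  let A : Set G := {u | ‖x‖ / 2 ≤ ‖u‖}
  have hA : MeasurableSet A := (isClosed_le continuous_const continuous_norm).measurableSet
  let B : Set G := (x + ·) ⁻¹' A
  have hcover : A ∪ B = Set.univ := by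
    refine Set.eq_univ_of_forall fun u => ?_
    by_contra! hu
    simp only [A, B, Set.mem_union, Set.mem_preimage, Set.mem_ofPred_eq, not_or, not_le] at hu
    have hx : ‖x‖ ≤ ‖x + u‖ + ‖u‖ := by simpa using norm_sub_le (x + u) u
    linarith
  have htrans : MeasurePreserving (x + ·) μ μ := measurePreserving_add_left μ x
  have hgx : AEStronglyMeasurable (fun u => g (x + u)) μ := hg.comp_measurePreserving htrans
  calc enormCorrelation μ f g x
      = ∫⁻ u in A ∪ B, ‖f u‖ₑ * ‖g (x + u)‖ₑ ∂μ := by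
        rw [hcover, setLIntegral_univ, enormCorrelation]
    _ ≤ ∫⁻ u in A, ‖f u‖ₑ * ‖g (x + u)‖ₑ ∂μ + ∫⁻ u in B, ‖f u‖ₑ * ‖g (x + u)‖ₑ ∂μ :=
        lintegral_union_le _ A B
    _ ≤ eLpNorm f p (μ.restrict A) * eLpNorm (fun u => g (x + u)) q (μ.restrict A) +
          eLpNorm f p (μ.restrict B) * eLpNorm (fun u => g (x + u)) q (μ.restrict B) :=
        add_le_add
          (lintegral_enorm_mul_enorm_le_eLpNorm_mul_eLpNorm hf.restrict hgx.restrict)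
          (lintegral_enorm_mul_enorm_le_eLpNorm_mul_eLpNorm hf.restrict hgx.restrict)
    _ ≤ eLpNorm f p (μ.restrict A) * eLpNorm (fun u => g (x + u)) q μ +
          eLpNorm f p μ * eLpNorm (fun u => g (x + u)) q (μ.restrict B) := by
        gcongr <;> exact Measure.restrict_le_self
    _ = eLpNorm f p (μ.restrict A) * eLpNorm g q μ +
          eLpNorm f p μ * eLpNorm g q (μ.restrict A) := by
        rw [← eLpNorm_comp_measurePreserving hg htrans,
          ← eLpNorm_comp_measurePreserving hg.restrict (htrans.restrict_preimage hA)]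
        rfl

theorem tendsto_enormCorrelation_cobounded (hf : MemLp f p μ) (hg : MemLp g q μ) (hp : p ≠ ∞)
    (hq : q ≠ ∞) : Tendsto (enormCorrelation μ f g) (cobounded G) (𝓝 0) := by
  have hnorm : Tendsto (fun x : G => ‖x‖ / 2) (cobounded G) atTop :=
    tendsto_norm_cobounded_atTop.atTop_div_const two_pos
  have hf_tail := (tendsto_eLpNorm_restrict_le_norm_atTop hf hp).comp hnorm
  have hg_tail := (tendsto_eLpNorm_restrict_le_norm_atTop hg hq).comp hnorm
  have hbound := (ENNReal.Tendsto.mul_const hf_tail (.inr hg.eLpNorm_ne_top)).add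
    (ENNReal.Tendsto.const_mul hg_tail (.inr hf.eLpNorm_ne_top))
  rw [zero_mul, mul_zero, add_zero] at hbound
  exact tendsto_of_tendsto_of_tendsto_of_le_of_le tendsto_const_nhds hbound
    (fun _ => zero_le) (enormCorrelation_le_tail hf.1 hg.1)

end Correlation

theorem tendsto_inv_smul_nhdsNE_zero_cobounded {𝕜 E : Type*} [NormedDivisionRing 𝕜]
    [NormedAddCommGroup E] [Module 𝕜 E] [NormSMulClass 𝕜 E] {v : E} (hv : v ≠ 0) :
    Tendsto (fun h : 𝕜 => h⁻¹ • v) (𝓝[≠] 0) (cobounded E) := by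
  rw [← tendsto_norm_atTop_iff_cobounded]
  simp only [norm_smul]
  exact (tendsto_norm_cobounded_atTop.comp tendsto_inv₀_nhdsNE_zero).atTop_mul_const
    (norm_pos_iff.mpr hv)

section Rescaling

variable {E : Type*} [NormedAddCommGroup E] [NormedSpace ℝ E] [FiniteDimensional ℝ E]
  [MeasurableSpace E] [BorelSpace E] {μ : Measure E} [μ.IsAddHaarMeasure]

theorem lintegral_comp_inv_smul_sub (F : E → ℝ≥0∞) {h : ℝ} (hh : h ≠ 0) (w : E) :
    ∫⁻ x, F (h⁻¹ • (x - w)) ∂μ = ‖h ^ finrank ℝ E‖ₑ * ∫⁻ u, F u ∂μ := by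
  have hemb : MeasurableEmbedding (h⁻¹ • · : E → E) :=
    measurableEmbedding_const_smul₀ (inv_ne_zero hh)
  rw [lintegral_sub_right_eq_self (fun x => F (h⁻¹ • x)) w, ← hemb.lintegral_map F,
    Measure.map_addHaar_smul μ (inv_ne_zero hh), lintegral_smul_measure, inv_pow, inv_inv,
    ← Real.enorm_eq_ofReal_abs, smul_eq_mul]

theorem lintegral_enorm_rescaled_mul_enorm_rescaled {F₁ F₂ : Type*} [ENorm F₁] [ENorm F₂]
    (k : E → F₁) (l : E → F₂) {h : ℝ} (hh : h ≠ 0) (w w' : E) :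
    ∫⁻ x, ‖k (h⁻¹ • (x - w))‖ₑ * ‖l (h⁻¹ • (x - w'))‖ₑ ∂μ =
      ‖h ^ finrank ℝ E‖ₑ * enormCorrelation μ k l (h⁻¹ • (w - w')) := by
  have hshift (x : E) : h⁻¹ • (x - w') = h⁻¹ • (w - w') + h⁻¹ • (x - w) := by
    rw [← smul_add]; congr 1; abel
  calc ∫⁻ x, ‖k (h⁻¹ • (x - w))‖ₑ * ‖l (h⁻¹ • (x - w'))‖ₑ ∂μ
      = ∫⁻ x, ‖k (h⁻¹ • (x - w))‖ₑ * ‖l (h⁻¹ • (w - w') + h⁻¹ • (x - w))‖ₑ ∂μ :=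
        lintegral_congr fun x => by rw [← hshift]
    _ = ‖h ^ finrank ℝ E‖ₑ * enormCorrelation μ k l (h⁻¹ • (w - w')) :=
        lintegral_comp_inv_smul_sub (fun u => ‖k u‖ₑ * ‖l (h⁻¹ • (w - w') + u)‖ₑ) hh w

variable {𝕜 : Type*} [RCLike 𝕜]

theorem enorm_inv_smul_integral_mul_rescaled_le {φ : E → 𝕜} (hφ : eLpNorm φ ∞ μ ≠ ∞)
    (k l : E → 𝕜) {h : ℝ} (hh : h ≠ 0) (w w' : E) :
    ‖(h ^ finrank ℝ E)⁻¹ • ∫ x, φ x * k (h⁻¹ • (x - w)) * l (h⁻¹ • (x - w')) ∂μ‖ₑ ≤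
      eLpNorm φ ∞ μ * enormCorrelation μ k l (h⁻¹ • (w - w')) := by
  have hφ_le : ∀ᵐ x ∂μ, ‖φ x‖ₑ ≤ eLpNorm φ ∞ μ := by
    simpa using ae_le_eLpNormEssSup (f := φ) (μ := μ)
  have hintegrand : ∀ᵐ x ∂μ, ‖φ x * k (h⁻¹ • (x - w)) * l (h⁻¹ • (x - w'))‖ₑ ≤
      eLpNorm φ ∞ μ * (‖k (h⁻¹ • (x - w))‖ₑ * ‖l (h⁻¹ • (x - w'))‖ₑ) := by
    filter_upwards [hφ_le] with x hx
    rw [enorm_mul, enorm_mul, mul_assoc]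
    gcongr
  have hpow : h ^ finrank ℝ E ≠ 0 := pow_ne_zero _ hh
  rw [enorm_smul, enorm_inv hpow, ENNReal.inv_mul_le_iff (enorm_ne_zero.mpr hpow) enorm_ne_top]
  calc ‖∫ x, φ x * k (h⁻¹ • (x - w)) * l (h⁻¹ • (x - w')) ∂μ‖ₑ
      ≤ ∫⁻ x, ‖φ x * k (h⁻¹ • (x - w)) * l (h⁻¹ • (x - w'))‖ₑ ∂μ :=
        enorm_integral_le_lintegral_enorm _
    _ ≤ ∫⁻ x, eLpNorm φ ∞ μ * (‖k (h⁻¹ • (x - w))‖ₑ * ‖l (h⁻¹ • (x - w'))‖ₑ) ∂μ :=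
        lintegral_mono_ae hintegrand
    _ = ‖h ^ finrank ℝ E‖ₑ * (eLpNorm φ ∞ μ * enormCorrelation μ k l (h⁻¹ • (w - w'))) := by
        rw [lintegral_const_mul' _ _ hφ, lintegral_enorm_rescaled_mul_enorm_rescaled k l hh,
          mul_left_comm]

theorem kernel_regression_covariance_vanishes_general {p q : ℝ≥0∞} [p.HolderConjugate q]
    (hp : p ≠ ∞) (hq : q ≠ ∞) {φ k l : E → 𝕜} (hφ : MemLp φ ∞ μ) (hk : MemLp k p μ)
    (hl : MemLp l q μ) {w w' : E} (hww' : w ≠ w') :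
    Tendsto (fun h : ℝ => (h ^ finrank ℝ E)⁻¹ •
        ∫ x, φ x * k (h⁻¹ • (x - w)) * l (h⁻¹ • (x - w')) ∂μ) (𝓝[≠] 0) (𝓝 0) := by
  have hcorr : Tendsto (fun h : ℝ => enormCorrelation μ k l (h⁻¹ • (w - w'))) (𝓝[≠] 0) (𝓝 0) :=
    (tendsto_enormCorrelation_cobounded hk hl hp hq).comp
      (tendsto_inv_smul_nhdsNE_zero_cobounded (sub_ne_zero.mpr hww'))
  have hbound := ENNReal.Tendsto.const_mul hcorr (.inr hφ.eLpNorm_ne_top)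
  rw [mul_zero] at hbound
  refine tendsto_zero_iff_enorm_tendsto_zero.mpr
    (tendsto_of_tendsto_of_tendsto_of_le_of_le' tendsto_const_nhds hbound
      (.of_forall fun _ => zero_le) ?_)
  filter_upwards [self_mem_nhdsWithin] with h hh
  exact enorm_inv_smul_integral_mul_rescaled_le hφ.eLpNorm_ne_top k l hh w w'

end Rescaling

/-- The final claim of Theorem 6 in the appendix of Rambachan & Shephard: if the kernel
autocorrelation `k*(x) = ∫ k(u) k(x + u) du` vanishes as `|x| → ∞`, then for bounded measurable
`φ` and distinct evaluation points `w ≠ w'`, the scaled covariance term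
`h⁻¹ ∫ φ(x) k((x − w)/h) k((x − w')/h) dx` tends to `0` as `h → 0⁺`. -/
theorem kernel_regression_covariance_vanishes
    (k : ℝ → ℝ) (hk_nonneg : ∀ u, 0 ≤ k u) (B : ℝ) (hk_bdd : ∀ u, k u ≤ B)
    (hk_int : Integrable k)
    (kstar : ℝ → ℝ) (hkstar : ∀ x, kstar x = ∫ u : ℝ, k u * k (x + u))
    (hkstar_vanish : Tendsto kstar (cocompact ℝ) (nhds 0))
    (φ : ℝ → ℝ) (hφ_meas : Measurable φ) (Bφ : ℝ) (hφ_bdd : ∀ x, |φ x| ≤ Bφ)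
    (w w' : ℝ) (hww' : w ≠ w') :
    Tendsto (fun h : ℝ => h⁻¹ * ∫ x : ℝ, φ x * k ((x - w) / h) * k ((x - w') / h))
      (nhdsWithin 0 (Set.Ioi 0)) (nhds 0) := by
  have hφ : MemLp φ ∞ := memLp_top_of_bound hφ_meas.aestronglyMeasurable Bφ (.of_forall hφ_bdd)
  have hk_top : MemLp k ∞ := memLp_top_of_bound hk_int.1 B (.of_forall fun u =>
    (Real.norm_of_nonneg (hk_nonneg u)).trans_le (hk_bdd u))
  have hk : MemLp k 2 := (memLp_two_iff_integrable_sq hk_int.1).mpr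
    (by simpa only [sq] using! hk_int.mul_of_top_left hk_top)
  simpa [div_eq_inv_mul] using (kernel_regression_covariance_vanishes_general (p := 2) (q := 2)
    (by simp) (by simp) hφ hk hk hww').mono_left (nhdsGT_le_nhdsNE 0)
end
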